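/- Let F be a field, σ a sesqui-morphism, G a σ-symmetric F*-graph with adjacency matrix M on vertex set V, and xy an edge (M(x,y) ≠ 0). Let N be the adjacency matrix of the pivot-complementation G∧xy. Then for every subset X ⊆ V, rk(N[X, V\X]) = rk(M[X, V\X]). -/

import Mathlib

theorem aux_le {m n F : Type*} [Fintype m] [Fintype n] [Field F] (A B : Matrix m n F)
    (h : ∀ i, B i ∈ Submodule.span F (Set.range A)) : B.rank ≤ A.rank := by
  rw [Matrix.rank_eq_finrank_span_row, Matrix.rank_eq_finrank_span_row]
  apply Submodule.finrank_mono
  rw [Submodule.span_le]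
  rintro _ ⟨i, rfl⟩
  exact h i

theorem aux_rows {m n F : Type*} [Fintype m] [Fintype n] [Field F] (A B : Matrix m n F)
    (p q : m) (c d : F) (hc : c ≠ 0) (hd : d ≠ 0) (u v : m → F)
    (hp : ∀ j, B p j = c * A q j) (hq : ∀ j, B q j = d * A p j)
    (hi : ∀ i, i ≠ p → i ≠ q → ∀ j, B i j = A i j - u i * A q j - v i * A p j) :
    B.rank = A.rank := by
  have key : ∀ (C : Matrix m n F) (i : m), C i ∈ Submodule.span F (Set.range C) :=
    fun C i => Submodule.subset_span ⟨i, rfl⟩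
  apply le_antisymm
  · apply aux_le
    intro i
    by_cases h1 : i = p
    · have : B i = c • A q := by subst h1; ext j; simp [hp]
      rw [this]; exact Submodule.smul_mem _ _ (key A q)
    by_cases h2 : i = q
    · have : B i = d • A p := by subst h2; ext j; simp [hq]
      rw [this]; exact Submodule.smul_mem _ _ (key A p)
    have : B i = A i - u i • A q - v i • A p := by ext j; simp [hi i h1 h2]
    rw [this]
    exact Submodule.sub_mem _ (Submodule.sub_mem _ (key A i) (Submodule.smul_mem _ _ (key A q)))
      (Submodule.smul_mem _ _ (key A p))
  · apply aux_le
    intro i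
    by_cases h1 : i = p
    · have : A i = d⁻¹ • B q := by subst h1; ext j; simp [hq, hd]
      rw [this]; exact Submodule.smul_mem _ _ (key B q)
    by_cases h2 : i = q
    · have : A i = c⁻¹ • B p := by subst h2; ext j; simp [hp, hc]
      rw [this]; exact Submodule.smul_mem _ _ (key B p)
    have : A i = B i + (u i * c⁻¹) • B p + (v i * d⁻¹) • B q := by
      ext j; simp [hi i h1 h2, hp, hq]; field_simp; ring
    rw [this]
    exact Submodule.add_mem _ (Submodule.add_mem _ (key B i) (Submodule.smul_mem _ _ (key B p)))
      (Submodule.smul_mem _ _ (key B q))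

theorem aux_schur {m n F : Type*} [Fintype m] [Fintype n] [Field F] (A S : Matrix m n F)
    (p : m) (q : n) (h : A p q ≠ 0) (hS : ∀ i j, S i j = A i j - A i q * A p j / A p q) :
    A.rank = S.rank + 1 := by
  rw [Matrix.rank_eq_finrank_span_row, Matrix.rank_eq_finrank_span_row]
  have hrow : ∀ i, A i = S i + (A i q / A p q) • A p := by
    intro i; ext j; simp [hS]; ring
  have h1 : Submodule.span F (Set.range A.row) =
      Submodule.span F (Set.range S.row) ⊔ Submodule.span F {A p} := by
    apply le_antisymm
    · rw [Submodule.span_le]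
      rintro _ ⟨i, rfl⟩
      change A i ∈ _
      rw [hrow i]
      exact Submodule.add_mem_sup (Submodule.subset_span ⟨i, rfl⟩)
        (Submodule.smul_mem _ _ (Submodule.mem_span_singleton_self _))
    · have hA : ∀ i, A i ∈ Submodule.span F (Set.range A.row) :=
        fun i => Submodule.subset_span ⟨i, rfl⟩
      apply sup_le
      · rw [Submodule.span_le]
        rintro _ ⟨i, rfl⟩
        have : S.row i = A i - (A i q / A p q) • A p := by
          rw [eq_sub_iff_add_eq]; exact (hrow i).symm
        rw [this]
        exact Submodule.sub_mem _ (hA i) (Submodule.smul_mem _ _ (hA p))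
      · rw [Submodule.span_le]
        rintro _ rfl
        exact hA p
  have h0 : ∀ w ∈ Submodule.span F (Set.range S.row), w q = 0 := by
    intro w hw
    have : Submodule.span F (Set.range S.row) ≤
        LinearMap.ker (LinearMap.proj q : (n → F) →ₗ[F] F) := by
      rw [Submodule.span_le]
      rintro _ ⟨i, rfl⟩
      simp [Matrix.row, hS, h]
    simpa using this hw
  have h2 : Submodule.span F (Set.range S.row) ⊓ Submodule.span F {A p} = ⊥ := by
    rw [eq_bot_iff]
    rintro w ⟨hw, hw'⟩
    obtain ⟨c, rfl⟩ := Submodule.mem_span_singleton.1 hw'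
    have := h0 _ hw
    simp [h] at this
    simp [this]
  have h3 := Submodule.finrank_sup_add_finrank_inf_eq
    (Submodule.span F (Set.range S.row)) (Submodule.span F {A p})
  have h4 : A p ≠ 0 := fun hh => h (by rw [hh]; rfl)
  rw [h2, finrank_bot, finrank_span_singleton h4] at h3
  rw [h1]; simpa using h3

theorem aux_schur2 {m n F : Type*} [Fintype m] [Fintype n] [Field F] (A B : Matrix m n F)
    (p : m) (q : n) (h : A p q ≠ 0) (h' : B p q ≠ 0)
    (hS : ∀ i j, i ≠ p → j ≠ q → B i j - B i q * B p j / B p q = A i j - A i q * A p j / A p q) :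
    B.rank = A.rank := by
  rw [aux_schur A (fun i j => A i j - A i q * A p j / A p q) p q h (fun _ _ => rfl),
    aux_schur B (fun i j => A i j - A i q * A p j / A p q) p q h']
  intro i j
  by_cases h1 : i = p
  · subst h1; field_simp; simp
  by_cases h2 : j = q
  · subst h2; field_simp; simp
  exact (hS i j h1 h2).symm


noncomputable def rkSub {V W F : Type*} [Fintype V] [Fintype W] [Field F]
    (M : Matrix V W F) (X : Finset V) (Y : Finset W) : ℕ :=
  (M.submatrix (fun i : X => (i : V)) (fun j : Y => (j : W))).rank

/-- Pivot-complementation does not change the cut-rank function. -/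
theorem pivot_cutrank {F V : Type*} [Field F] [Fintype V] [DecidableEq V]
    (σ : F → F)
    (hinv : ∀ a : F, σ (σ a) = a)
    (hauto : ∃ e : F ≃+* F, ∀ x : F, e x = σ x / σ 1)
    (M : Matrix V V F) (hsym : ∀ z t : V, M z t = σ (M t z))
    (hdiag : ∀ z : V, M z z = 0)
    (x y : V) (hxy : x ≠ y) (hedge : M x y ≠ 0)
    (N : Matrix V V F)
    (hN : ∀ z t : V,
      N z t =
        if z = t then 0
        else if z = x ∧ t = y then -1 / M y x
        else if z = y ∧ t = x then -(σ 1 ^ 2) / M x y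
        else if z = x then M y t / M y x
        else if z = y then σ 1 * M x t / M x y
        else if t = x then σ 1 * M z y / M x y
        else if t = y then M z x / M y x
        else M z t - M z x * M y t / M y x - M z y * M x t / M x y) :
    ∀ X : Finset V, rkSub N X Xᶜ = rkSub M X Xᶜ := by
  intro X
  have hs : σ 1 ≠ 0 := by
    obtain ⟨e, he⟩ := hauto
    intro h
    have := he 1
    simp [h] at this
  have hs0 : σ 0 = 0 := by
    obtain ⟨e, he⟩ := hauto
    have := he 0
    rw [map_zero, eq_comm, div_eq_zero_iff] at this
    exact this.resolve_right hs
  have hb : M y x ≠ 0 := by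
    intro h
    exact hedge (by rw [hsym x y, h, hs0])
  have hd : ∀ (i : X) (j : (Xᶜ : Finset V)), (i : V) ≠ j := by
    intro i j h
    exact (Finset.mem_compl.1 j.2) (h ▸ i.2)
  unfold rkSub
  by_cases hx : x ∈ X <;> by_cases hy : y ∈ X
  · apply aux_rows _ _ (⟨x, hx⟩ : X) (⟨y, hy⟩ : X) (1 / M y x) (σ 1 / M x y) (by simp [hb])
      (by simp [hs, hedge]) (fun i : X => M i x / M y x) (fun i : X => M i y / M x y)
    · intro j
      have h1 := hd ⟨x, hx⟩ j
      have h2 := hd ⟨y, hy⟩ j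
      simp only [Matrix.submatrix_apply, hN]
      simp only at h1 h2
      simp [h1, h2.symm, hxy]
      ring
    · intro j
      have h1 := hd ⟨x, hx⟩ j
      have h2 := hd ⟨y, hy⟩ j
      simp only [Matrix.submatrix_apply, hN]
      simp only at h1 h2
      simp [h1.symm, h2, hxy.symm]
      ring
    · intro i hi1 hi2 j
      have h1 := hd ⟨x, hx⟩ j
      have h2 := hd ⟨y, hy⟩ j
      have h3 := hd i j
      have hi1' : (i : V) ≠ x := fun h => hi1 (Subtype.ext h)
      have hi2' : (i : V) ≠ y := fun h => hi2 (Subtype.ext h)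
      simp only [Matrix.submatrix_apply, hN]
      simp only at h1 h2
      simp [h1.symm, h2.symm, h3, hi1', hi2']
      ring
  · have hy' : y ∈ Xᶜ := Finset.mem_compl.2 hy
    apply aux_schur2 _ _ ⟨x, hx⟩ ⟨y, hy'⟩
    · simpa using hedge
    · simp [hN, hxy, hb]
    · intro i j hi1 hj1
      have hi : (i : V) ≠ x := fun h => hi1 (Subtype.ext h)
      have hj : (j : V) ≠ y := fun h => hj1 (Subtype.ext h)
      have h1 := hd ⟨x, hx⟩ j
      have h2 := hd i ⟨y, hy'⟩
      have h3 := hd i j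
      simp only at h1 h2
      simp only [Matrix.submatrix_apply, hN]
      simp [h1, h1.symm, h2, h3, hi, hj, hxy, hxy.symm]
      field_simp
      ring
  · have hx' : x ∈ Xᶜ := Finset.mem_compl.2 hx
    apply aux_schur2 _ _ ⟨y, hy⟩ ⟨x, hx'⟩
    · simpa using hb
    · simp [hN, hxy, hxy.symm, hedge, hs]
    · intro i j hi1 hj1
      have hi : (i : V) ≠ y := fun h => hi1 (Subtype.ext h)
      have hj : (j : V) ≠ x := fun h => hj1 (Subtype.ext h)
      have h1 := hd ⟨y, hy⟩ j
      have h2 := hd i ⟨x, hx'⟩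
      have h3 := hd i j
      simp only at h1 h2
      simp only [Matrix.submatrix_apply, hN]
      simp [h1, h1.symm, h2, h3, hi, hj, hxy, hxy.symm]
      field_simp
      ring
  · have hx' : x ∈ Xᶜ := Finset.mem_compl.2 hx
    have hy' : y ∈ Xᶜ := Finset.mem_compl.2 hy
    rw [← Matrix.rank_transpose, ← Matrix.rank_transpose (M.submatrix _ _)]
    apply aux_rows _ _ (⟨x, hx'⟩ : (Xᶜ : Finset V)) (⟨y, hy'⟩ : (Xᶜ : Finset V)) (σ 1 / M x y) (1 / M y x)
      (by simp [hs, hedge]) (by simp [hb]) (fun j : (Xᶜ : Finset V) => M x j / M x y) (fun j : (Xᶜ : Finset V) => M y j / M y x)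
    · intro i
      have h1 := hd i ⟨x, hx'⟩
      have h2 := hd i ⟨y, hy'⟩
      simp only [Matrix.transpose_apply, Matrix.submatrix_apply, hN]
      simp only at h1 h2
      simp [h1, h2]
      ring
    · intro i
      have h1 := hd i ⟨x, hx'⟩
      have h2 := hd i ⟨y, hy'⟩
      simp only [Matrix.transpose_apply, Matrix.submatrix_apply, hN]
      simp only at h1 h2
      simp [h1, h2, hxy.symm]
      ring
    · intro j hj1 hj2 i
      have h1 := hd i ⟨x, hx'⟩
      have h2 := hd i ⟨y, hy'⟩
      have h3 := hd i j
      have hj1' : (j : V) ≠ x := fun h => hj1 (Subtype.ext h)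
      have hj2' : (j : V) ≠ y := fun h => hj2 (Subtype.ext h)
      simp only [Matrix.transpose_apply, Matrix.submatrix_apply, hN]
      simp only at h1 h2
      simp [h1, h2, h3, hj1', hj2']
      ring
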